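/- arXiv:2004.05088 — 2 statements merged into one kernel-verified Lean document; each statement's English description precedes it below -/
import Mathlib

section
/- The limit of P_W(w) as w → ∞ equals 1; equivalently, P_W is the cumulative distribution function of a probability distribution on [0, ∞) having an atom of mass 1 − λD at 0. -/
open Real MeasureTheory Filter

/-- Stationary waiting-time CDF of the M/D/1 queue (Erlang's formula),
extended by `0` on the negative reals. -/
noncomputable def PW (lam D w : ℝ) : ℝ :=
  if w < 0 then 0 else
    (1 - lam * D) * ∑ k ∈ Finset.range (⌊w / D⌋₊ + 1),
      (-(lam * (w - (k : ℝ) * D))) ^ k * Real.exp (lam * (w - (k : ℝ) * D)) /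
        (Nat.factorial k)

/-- Continuous part of the stationary waiting-time density of the M/D/1 queue. -/
noncomputable def fW (lam D w : ℝ) : ℝ :=
  (1 - lam * D) * (lam * Real.exp (lam * w) +
    ∑ k ∈ Finset.Icc 1 ⌊w / D⌋₊,
      (-lam) ^ k * (w - (k : ℝ) * D) ^ (k - 1) * Real.exp (lam * (w - (k : ℝ) * D)) *
        ((k : ℝ) + lam * (w - (k : ℝ) * D)) / (Nat.factorial k))

/-!
Writing `w = n D + x` with `0 ≤ x < D`, Erlang's sum becomes a sequence `h n` of smooth functions on
`[0, D]`, glued end to end and satisfying the delay equation `h (n + 1)' = λ (h (n + 1) - h n)`.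
Integrating this equation shows that `h n D - λ ∫₀ᴰ h n` does not depend on `n`; for the Erlang sum
it equals `1`. The only constant with this invariant is `c = (1 - λ D)⁻¹`. The difference `h n - c`
has invariant `0`, so that
`h (n + 1) x - c = λ (∫₀ˣ (h (n + 1) - c) + ∫ₓᴰ (h n - c))`.
The right-hand side integrates over a window of length `D`, so each period shrinks the sup norm of
`h n - c` by the factor `|λ| D < 1`.
-/

lemma one_sub_mul_ne_zero_of_abs_mul_lt_one {a b : ℝ} (hb : 0 ≤ b) (h : |a| * b < 1) :
    1 - a * b ≠ 0 :=
  (sub_pos.2 ((mul_le_mul_of_nonneg_right (le_abs_self a) hb).trans_lt h)).ne'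

section Delay

variable {E : Type*}

/-- The function on `[0, ∞)` whose restriction to the period `[n D, (n + 1) D)` is the `n`-th piece
`h n`, each piece being written in the time elapsed since the start of its period. -/
noncomputable def gluePieces (D : ℝ) (h : ℕ → ℝ → E) (w : ℝ) : E :=
  h ⌊w / D⌋₊ (w - ⌊w / D⌋₊ * D)

lemma tendsto_period_elapsed {D : ℝ} (hD : 0 < D) :
    Tendsto (fun w : ℝ => (⌊w / D⌋₊, w - ⌊w / D⌋₊ * D)) atTop (atTop ×ˢ 𝓟 (Set.Icc 0 D)) := by
  have hperiod : Tendsto (fun w : ℝ => ⌊w / D⌋₊) atTop atTop :=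
    tendsto_nat_floor_atTop.comp (tendsto_id.atTop_div_const hD)
  refine hperiod.prodMk (tendsto_principal.2 ?_)
  filter_upwards [eventually_ge_atTop 0] with w hw
  have hle := (le_div_iff₀ hD).1 (Nat.floor_le (div_nonneg hw hD.le))
  have hlt := (div_lt_iff₀ hD).1 (Nat.lt_floor_add_one (w / D))
  constructor <;> linarith

lemma tendsto_gluePieces [UniformSpace E] {D : ℝ} {h : ℕ → ℝ → E} {c : E}
    (hD : 0 < D) (hc : TendstoUniformlyOn h (fun _ => c) atTop (Set.Icc 0 D)) :
    Tendsto (gluePieces D h) atTop (nhds c) :=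
  (tendsto_prod_principal_iff.2 hc).comp (tendsto_period_elapsed hD)

variable [NormedAddCommGroup E] [NormedSpace ℝ E]

lemma norm_le_of_eq_smul_integral_add_integral {lam D B : ℝ} {f g : ℝ → E}
    (hlam : |lam| * D < 1) (hg : ContinuousOn g (Set.Icc 0 D))
    (hfg : ∀ x ∈ Set.Icc 0 D, g x = lam • ((∫ t in 0..x, g t) + ∫ t in x..D, f t))
    (hf : ∀ x ∈ Set.Icc 0 D, ‖f x‖ ≤ B) {x : ℝ} (hx : x ∈ Set.Icc 0 D) :
    ‖g x‖ ≤ |lam| * D * B := by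
  obtain ⟨z, hz, hmax⟩ := isCompact_Icc.exists_isMaxOn ⟨x, hx⟩ hg.norm
  have hgz : ∀ t ∈ Set.Icc 0 D, ‖g t‖ ≤ ‖g z‖ := fun t ht => hmax ht
  have hintegral {u : ℝ → E} {a b C : ℝ} (hab : a ≤ b) (hsub : Set.Icc a b ⊆ Set.Icc 0 D)
      (hu : ∀ t ∈ Set.Icc 0 D, ‖u t‖ ≤ C) : ‖∫ t in a..b, u t‖ ≤ C * (b - a) := by
    rw [← abs_of_nonneg (sub_nonneg.2 hab)]
    refine intervalIntegral.norm_integral_le_of_norm_le_const fun t ht => hu t (hsub ?_)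
    exact Set.Ioc_subset_Icc_self (Set.uIoc_of_le hab ▸ ht)
  have hbound {M : ℝ} (hgM : ‖g z‖ ≤ M) (hBM : B ≤ M) : ‖g z‖ ≤ |lam| * D * M :=
    calc ‖g z‖ = |lam| * ‖(∫ t in 0..z, g t) + ∫ t in z..D, f t‖ := by
          rw [← Real.norm_eq_abs, ← norm_smul, ← hfg z hz]
      _ ≤ |lam| * (M * (z - 0) + M * (D - z)) := by
          gcongr
          exact norm_add_le_of_le
            (hintegral hz.1 (Set.Icc_subset_Icc_right hz.2) fun t ht => (hgz t ht).trans hgM)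
            (hintegral hz.2 (Set.Icc_subset_Icc_left hz.1) fun t ht => (hf t ht).trans hBM)
      _ = |lam| * D * M := by ring
  have hgB : ‖g z‖ ≤ B := by
    by_contra! hlt
    have hpos : 0 < ‖g z‖ := ((norm_nonneg _).trans (hf z hz)).trans_lt hlt
    exact (hbound le_rfl hlt.le).not_gt (mul_lt_of_lt_one_left hpos hlam)
  exact (hgz x hx).trans (hbound hgB le_rfl)

/-- The quantity `f D - λ ∫₀ᴰ f`, which the delay equation transports unchanged from each piece of a
solution to the next. -/
noncomputable def delayInvariant (lam D : ℝ) (f : ℝ → E) : E :=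
  f D - lam • ∫ t in 0..D, f t

lemma delayInvariant_sub_const [CompleteSpace E] {lam D : ℝ} {f : ℝ → E}
    (hf : IntervalIntegrable f volume 0 D) (c : E) :
    delayInvariant lam D (fun x => f x - c) = delayInvariant lam D f - (1 - lam * D) • c := by
  rw [delayInvariant, delayInvariant, intervalIntegral.integral_sub hf intervalIntegrable_const,
    intervalIntegral.integral_const, sub_zero]
  module

/-- The pieces `h n` on `[0, D]` of a continuous solution of the delay equation
`φ' w = λ (φ w - φ (w - D))` for `w > D`, as produced by the method of steps:
`h n x = φ (n D + x)`. The equation is not imposed where periods meet, and the initial piece `h 0`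
is only required to be continuous. -/
structure IsDelaySolution (lam D : ℝ) (h : ℕ → ℝ → E) : Prop where
  continuousOn (n : ℕ) : ContinuousOn (h n) (Set.Icc 0 D)
  hasDerivAt (n : ℕ) {x : ℝ} (hx : x ∈ Set.Ioo 0 D) :
    HasDerivAt (h (n + 1)) (lam • (h (n + 1) x - h n x)) x
  apply_succ_zero (n : ℕ) : h (n + 1) 0 = h n D

namespace IsDelaySolution

variable {lam D x : ℝ} {h : ℕ → ℝ → E}

lemma sub_const (hh : IsDelaySolution lam D h) (c : E) :
    IsDelaySolution lam D fun n x => h n x - c where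
  continuousOn n := (hh.continuousOn n).sub continuousOn_const
  hasDerivAt n x hx := by simpa using (hh.hasDerivAt n hx).sub_const c
  apply_succ_zero n := by rw [hh.apply_succ_zero]

lemma intervalIntegrable (hh : IsDelaySolution lam D h) (n : ℕ) {a b : ℝ}
    (ha : a ∈ Set.Icc 0 D) (hb : b ∈ Set.Icc 0 D) : IntervalIntegrable (h n) volume a b :=
  ((hh.continuousOn n).mono (Set.uIcc_subset_Icc ha hb)).intervalIntegrable

variable [CompleteSpace E]

lemma apply_succ (hh : IsDelaySolution lam D h) (n : ℕ) (hx : x ∈ Set.Icc 0 D) :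
    h (n + 1) x = lam • ((∫ t in 0..x, h (n + 1) t) + ∫ t in x..D, h n t) +
      delayInvariant lam D (h n) := by
  have h0 : (0 : ℝ) ∈ Set.Icc 0 D := Set.left_mem_Icc.2 (hx.1.trans hx.2)
  have hD : D ∈ Set.Icc 0 D := Set.right_mem_Icc.2 (hx.1.trans hx.2)
  have hint (m : ℕ) := hh.intervalIntegrable m h0 hx
  have hftc := intervalIntegral.integral_eq_sub_of_hasDerivAt_of_le hx.1
    ((hh.continuousOn (n + 1)).mono (Set.Icc_subset_Icc_right hx.2))
    (fun t ht => hh.hasDerivAt n (Set.Ioo_subset_Ioo_right hx.2 ht))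
    (((hint (n + 1)).sub (hint n)).smul lam)
  rw [intervalIntegral.integral_smul, intervalIntegral.integral_sub (hint (n + 1)) (hint n),
    hh.apply_succ_zero, eq_sub_iff_add_eq] at hftc
  rw [← hftc, delayInvariant,
    ← intervalIntegral.integral_add_adjacent_intervals (hint n) (hh.intervalIntegrable n hx hD)]
  module

lemma delayInvariant_eq (hh : IsDelaySolution lam D h) (hD : 0 ≤ D) (n : ℕ) :
    delayInvariant lam D (h n) = delayInvariant lam D (h 0) := by
  induction n with
  | zero => rfl
  | succ n ih =>
    rw [← ih, delayInvariant, hh.apply_succ n (Set.right_mem_Icc.2 hD),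
      intervalIntegral.integral_same, add_zero, add_sub_cancel_left]

lemma norm_le_pow_mul (hh : IsDelaySolution lam D h) (hlam : |lam| * D < 1)
    (hzero : delayInvariant lam D (h 0) = 0) {B : ℝ} (hB : ∀ x ∈ Set.Icc 0 D, ‖h 0 x‖ ≤ B)
    (n : ℕ) : ∀ x ∈ Set.Icc 0 D, ‖h n x‖ ≤ (|lam| * D) ^ n * B := by
  induction n with
  | zero => simpa using hB
  | succ n ih =>
    intro x hx
    have hdelay : ∀ y ∈ Set.Icc 0 D,
        h (n + 1) y = lam • ((∫ t in 0..y, h (n + 1) t) + ∫ t in y..D, h n t) := fun y hy => by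
      rw [hh.apply_succ n hy, hh.delayInvariant_eq (hy.1.trans hy.2), hzero, add_zero]
    rw [pow_succ', mul_assoc]
    exact norm_le_of_eq_smul_integral_add_integral hlam (hh.continuousOn (n + 1)) hdelay ih hx

lemma tendstoUniformlyOn (hh : IsDelaySolution lam D h) (hD : 0 ≤ D) (hlam : |lam| * D < 1) :
    TendstoUniformlyOn h (fun _ => (1 - lam * D)⁻¹ • delayInvariant lam D (h 0)) atTop
      (Set.Icc 0 D) := by
  set c := (1 - lam * D)⁻¹ • delayInvariant lam D (h 0) with hc
  have hne := one_sub_mul_ne_zero_of_abs_mul_lt_one hD hlam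
  have hzero : delayInvariant lam D (fun x => h 0 x - c) = 0 := by
    rw [delayInvariant_sub_const
      (hh.intervalIntegrable 0 (Set.left_mem_Icc.2 hD) (Set.right_mem_Icc.2 hD)), hc,
      smul_inv_smul₀ hne, sub_self]
  obtain ⟨B, hB⟩ := isCompact_Icc.exists_bound_of_continuousOn ((hh.sub_const c).continuousOn 0)
  have hpow : Tendsto (fun n => (|lam| * D) ^ n * B) atTop (nhds 0) := by
    simpa using (tendsto_pow_atTop_nhds_zero_of_lt_one (by positivity) hlam).mul_const B
  rw [Metric.tendstoUniformlyOn_iff]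
  intro ε hε
  filter_upwards [hpow.eventually_lt_const hε] with n hn x hx
  rw [dist_comm, dist_eq_norm]
  exact ((hh.sub_const c).norm_le_pow_mul hlam hzero hB n x hx).trans_lt hn

end IsDelaySolution

end Delay

open Finset.HasAntidiagonal (antidiagonal)

/-- The `k`-th summand of Erlang's formula, in the variable `y = w - k D`. -/
noncomputable def erlangTerm (lam : ℝ) (k : ℕ) (y : ℝ) : ℝ :=
  (-(lam * y)) ^ k * Real.exp (lam * y) / k.factorial

/-- Erlang's sum on the `n`-th service period, in the time `x` elapsed since its start `n D`: for
`w = n D + x` and `k + j = n` the argument `w - k D` is `x + j D`. -/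
noncomputable def erlangPiece (lam D : ℝ) (n : ℕ) (x : ℝ) : ℝ :=
  ∑ p ∈ antidiagonal n, erlangTerm lam p.1 (x + p.2 * D)

lemma erlangTerm_zero_left (lam y : ℝ) : erlangTerm lam 0 y = Real.exp (lam * y) := by
  simp [erlangTerm]

lemma erlangTerm_succ_zero (lam : ℝ) (k : ℕ) : erlangTerm lam (k + 1) 0 = 0 := by
  simp [erlangTerm]

lemma hasDerivAt_erlangTerm_zero (lam y : ℝ) :
    HasDerivAt (erlangTerm lam 0) (lam * erlangTerm lam 0 y) y := by
  simpa [funext (erlangTerm_zero_left lam), mul_comm] using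
    ((hasDerivAt_id y).const_mul lam).exp

lemma hasDerivAt_erlangTerm_succ (lam : ℝ) (k : ℕ) (y : ℝ) :
    HasDerivAt (erlangTerm lam (k + 1)) (lam * (erlangTerm lam (k + 1) y - erlangTerm lam k y))
      y := by
  have hlin : HasDerivAt (fun y : ℝ => lam * y) lam y := by
    simpa using (hasDerivAt_id y).const_mul lam
  refine (((hlin.fun_neg.fun_pow (k + 1)).fun_mul hlin.exp).div_const
    ((k + 1).factorial : ℝ)).congr_deriv ?_
  simp only [erlangTerm, Nat.factorial_succ, Nat.add_sub_cancel]
  push_cast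
  field_simp
  ring

lemma continuous_erlangPiece (lam D : ℝ) (n : ℕ) : Continuous (erlangPiece lam D n) := by
  unfold erlangPiece erlangTerm
  fun_prop

lemma erlangPiece_zero (lam D x : ℝ) : erlangPiece lam D 0 x = erlangTerm lam 0 x := by
  simp [erlangPiece]

lemma erlangPiece_succ (lam D : ℝ) (n : ℕ) (x : ℝ) :
    erlangPiece lam D (n + 1) x = erlangTerm lam 0 (x + (n + 1 : ℕ) * D) +
      ∑ p ∈ antidiagonal n, erlangTerm lam (p.1 + 1) (x + p.2 * D) :=
  Finset.Nat.sum_antidiagonal_succ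

lemma erlangPiece_succ_apply_zero (lam D : ℝ) (n : ℕ) :
    erlangPiece lam D (n + 1) 0 = erlangPiece lam D n D := by
  rw [erlangPiece, Finset.Nat.sum_antidiagonal_succ']
  simp [erlangTerm_succ_zero, erlangPiece, add_mul, add_comm]

lemma hasDerivAt_erlangPiece_succ (lam D : ℝ) (n : ℕ) (x : ℝ) :
    HasDerivAt (erlangPiece lam D (n + 1))
      (lam * (erlangPiece lam D (n + 1) x - erlangPiece lam D n x)) x := by
  rw [funext (erlangPiece_succ lam D n)]
  refine (((hasDerivAt_erlangTerm_zero lam _).comp_add_const x _).add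
    (HasDerivAt.fun_sum fun p _ =>
      (hasDerivAt_erlangTerm_succ lam p.1 _).comp_add_const x (p.2 * D))).congr_deriv ?_
  rw [← Finset.mul_sum, Finset.sum_sub_distrib, erlangPiece]
  ring

lemma isDelaySolution_erlangPiece (lam D : ℝ) : IsDelaySolution lam D (erlangPiece lam D) where
  continuousOn n := (continuous_erlangPiece lam D n).continuousOn
  hasDerivAt n x _ := hasDerivAt_erlangPiece_succ lam D n x
  apply_succ_zero n := erlangPiece_succ_apply_zero lam D n

lemma delayInvariant_erlangPiece_zero (lam D : ℝ) :
    delayInvariant lam D (erlangPiece lam D 0) = 1 := by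
  simp only [delayInvariant, erlangPiece_zero, erlangTerm_zero_left, smul_eq_mul,
    intervalIntegral.mul_integral_comp_mul_left, integral_exp, mul_zero, Real.exp_zero,
    sub_sub_cancel]

lemma erlangPiece_sub_mul (lam D : ℝ) (n : ℕ) (w : ℝ) :
    erlangPiece lam D n (w - n * D) =
      ∑ k ∈ Finset.range (n + 1), erlangTerm lam k (w - k * D) := by
  rw [erlangPiece, Finset.Nat.sum_antidiagonal_eq_sum_range_succ
    fun k j => erlangTerm lam k (w - n * D + j * D)]
  refine Finset.sum_congr rfl fun k hk => ?_
  rw [Nat.cast_sub (Finset.mem_range_succ_iff.1 hk)]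
  ring_nf

lemma PW_eq_gluePieces {lam D w : ℝ} (hw : 0 ≤ w) :
    PW lam D w = (1 - lam * D) * gluePieces D (erlangPiece lam D) w := by
  rw [gluePieces, erlangPiece_sub_mul, PW, if_neg hw.not_gt]
  rfl

lemma PW_zero (lam D : ℝ) : PW lam D 0 = 1 - lam * D := by
  simp [PW]

theorem md1_cdf_tendsto_one_general (lam D : ℝ) (hD : 0 < D) (hstab : |lam| * D < 1) :
    Tendsto (PW lam D) atTop (nhds 1) ∧ PW lam D 0 = 1 - lam * D := by
  refine ⟨?_, PW_zero lam D⟩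
  have hne := one_sub_mul_ne_zero_of_abs_mul_lt_one hD.le hstab
  have hlim := (tendsto_gluePieces hD
    ((isDelaySolution_erlangPiece lam D).tendstoUniformlyOn hD.le hstab)).const_mul (1 - lam * D)
  rw [delayInvariant_erlangPiece_zero, smul_eq_mul, mul_one, mul_inv_cancel₀ hne] at hlim
  refine hlim.congr' ?_
  filter_upwards [eventually_ge_atTop 0] with w hw
  exact (PW_eq_gluePieces hw).symm

/-- the limit of `P_W w` as `w → ∞` equals `1` (so `P_W` is the CDF of a
probability distribution on `[0, ∞)`), and the atom at `0` has mass `1 - λ D`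
(the CDF jumps from `0` to `1 - λ D` at `w = 0`). -/
theorem md1_cdf_tendsto_one (lam D : ℝ) (hlam : 0 < lam) (hD : 0 < D)
    (hstab : lam * D < 1) :
    Filter.Tendsto (PW lam D) Filter.atTop (nhds 1) ∧ PW lam D 0 = 1 - lam * D :=
  md1_cdf_tendsto_one_general lam D hD ((abs_of_pos hlam).symm ▸ hstab)
end

section
/- Let 0 < λ < μ₁ with λD < 1 and set α₁ = μ₁ − λ. Then the probability p(A) that a packet is queued at both systems of the M/M/1–M/D/1 tandem satisfies (λ/μ₁) · [ (1 − λD)(1 − e^{−μ₁D}) + ∫₀^∞ (1 − e^{−μ₁(w+D)}) f_W(w) dw ] = (λ/μ₁) · ( 1 − (1 − λD) e^{−μ₁D} ( 1 + λ(e^{μ₁D} − 1)/(α₁ e^{μ₁D} + λ) ) ). -/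
open Real MeasureTheory Filter

/-!
The transform of the waiting time cannot be computed term by term: for `s ≤ λ` the individual terms
of Erlang's series are not even integrable against `e^{-sw}`, and `s = 0` is needed. Instead, the
series gives the delay equation `f(w) = λ (P(w) - P(w - D))`, where `P` is a primitive of `f` up to
its jump at `0`. Hence `f` solves the renewal equation `f = (1 - λD) k + k ⋆ f` with
`k = λ 1_{[0, D)}`, a kernel of mass `λD < 1`. This contraction makes `f` integrable, and
integrating the equation tilted by `e^{-sw}` gives the Pollaczek–Khinchine transform
`E[e^{-sW}] = (1 - λD) / (1 - λ ∫₀ᴰ e^{-st} dt)`. The case `s = 0` says that `W` has total mass `1`,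
and the case `s = μ₁` evaluates `E[1 - e^{-μ₁(W + D)}] = 1 - e^{-μ₁D} E[e^{-μ₁W}]`.
-/

section Renewal

open Set
open scoped Convolution

variable {E : Type*} [NormedAddCommGroup E] [NormedSpace ℝ E] {k : ℝ → ℝ} {g φ : ℝ → E}

/-- `φ` solves the renewal equation with kernel `k` and forcing term `g`. The equation is required
at every point, and the convolution runs over the whole line, so that causality of `k` is a separate
hypothesis where it matters. -/
def IsRenewalSolution (k : ℝ → ℝ) (g φ : ℝ → E) : Prop :=
  φ = g + (k ⋆ φ : ℝ → E)

namespace IsRenewalSolution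

theorem apply_eq (h : IsRenewalSolution k g φ) (w : ℝ) :
    φ w = g w + ∫ t, k t • φ (w - t) :=
  congrFun h w

theorem exp_smul (h : IsRenewalSolution k g φ) (s : ℝ) :
    IsRenewalSolution (fun t => Real.exp (s * t) * k t) (fun w => Real.exp (s * w) • g w)
      (fun w => Real.exp (s * w) • φ w) := by
  funext w
  have hexp (t : ℝ) : (Real.exp (s * t) * k t) • Real.exp (s * (w - t)) • φ (w - t) =
      Real.exp (s * w) • k t • φ (w - t) := by
    rw [smul_smul, smul_smul, mul_right_comm, ← Real.exp_add]
    ring_nf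
  rw [Pi.add_apply, convolution_lsmul]
  simp only [hexp]
  rw [integral_smul, ← smul_add, ← h.apply_eq]

theorem indicator_norm_le (h : IsRenewalSolution k g φ) (hk0 : ∀ t < 0, k t = 0) (T w : ℝ) :
    (Iic T).indicator (fun u => ‖φ u‖) w ≤
      ‖g w‖ + ((fun t => ‖k t‖) ⋆ (Iic T).indicator fun u => ‖φ u‖ : ℝ → ℝ) w := by
  have hψ0 (u : ℝ) : 0 ≤ (Iic T).indicator (fun u => ‖φ u‖) u :=
    indicator_nonneg (fun _ _ => norm_nonneg _) u
  rw [convolution_lsmul]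
  by_cases hw : w ∈ Iic T
  · have hcausal (t : ℝ) :
        ‖k t • φ (w - t)‖ = ‖k t‖ • (Iic T).indicator (fun u => ‖φ u‖) (w - t) := by
      rcases lt_or_ge t 0 with ht | ht
      · simp [hk0 t ht]
      · rw [norm_smul, indicator_of_mem (mem_Iic.2 (by linarith [mem_Iic.1 hw])), smul_eq_mul]
    calc (Iic T).indicator (fun u => ‖φ u‖) w = ‖g w + ∫ t, k t • φ (w - t)‖ := by
          rw [indicator_of_mem hw, ← h.apply_eq]
      _ ≤ ‖g w‖ + ∫ t, ‖k t • φ (w - t)‖ :=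
          (norm_add_le _ _).trans (by gcongr; exact norm_integral_le_integral_norm _)
      _ = _ := by simp only [hcausal]
  · rw [indicator_of_notMem hw]
    exact add_nonneg (norm_nonneg _)
      (integral_nonneg fun t => smul_nonneg (norm_nonneg _) (hψ0 _))

theorem setIntegral_Iic_norm_le (h : IsRenewalSolution k g φ) (hk : Integrable k)
    (hk0 : ∀ t < 0, k t = 0) (hg : Integrable g) {T : ℝ} (hφ : IntegrableOn φ (Iic T)) :
    ∫ w in Iic T, ‖φ w‖ ≤ (∫ w, ‖g w‖) + (∫ t, ‖k t‖) * ∫ w in Iic T, ‖φ w‖ := by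
  have hψ : Integrable ((Iic T).indicator fun w => ‖φ w‖) :=
    IntegrableOn.integrable_indicator hφ.norm measurableSet_Iic
  have hconv := hk.norm.integrable_convolution (ContinuousLinearMap.lsmul ℝ ℝ) hψ
  have hint := integral_mono hψ (hg.norm.add hconv) (h.indicator_norm_le hk0 T)
  rwa [integral_add' hg.norm hconv, integral_convolution _ hk.norm hψ,
    integral_indicator measurableSet_Iic] at hint

theorem integrable (h : IsRenewalSolution k g φ) (hk : Integrable k) (hk0 : ∀ t < 0, k t = 0)
    (hk1 : ∫ t, ‖k t‖ < 1) (hg : Integrable g) (hφ : ∀ T, IntegrableOn φ (Iic T)) :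
    Integrable φ := by
  refine (aecover_Iic (b := fun T : ℝ => T) tendsto_id).integrable_of_integral_norm_bounded
    ((∫ w, ‖g w‖) / (1 - ∫ t, ‖k t‖)) hφ (Eventually.of_forall fun T => ?_)
  rw [le_div_iff₀ (sub_pos.2 hk1)]
  linarith [h.setIntegral_Iic_norm_le hk hk0 hg (hφ T)]

theorem integral_eq [CompleteSpace E] (h : IsRenewalSolution k g φ) (hk : Integrable k)
    (hg : Integrable g) (hφ : Integrable φ) :
    ∫ w, φ w = (∫ w, g w) + (∫ t, k t) • ∫ w, φ w := by
  have hconv := hk.integrable_convolution (ContinuousLinearMap.lsmul ℝ ℝ) hφ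
  calc ∫ w, φ w = ∫ w, (g + (k ⋆ φ : ℝ → E)) w := by rw [← h]
    _ = _ := by
      rw [integral_add' hg hconv, integral_convolution _ hk hφ, ContinuousLinearMap.lsmul_apply]

end IsRenewalSolution

end Renewal

section Truncation

open Set

theorem intervalIntegrable_indicator_Ici {f : ℝ → ℝ} (hf : Continuous f) (a b c : ℝ) :
    IntervalIntegrable ((Ici c).indicator f) volume a b :=
  ⟨(hf.intervalIntegrable a b).1.indicator measurableSet_Ici,
    (hf.intervalIntegrable a b).2.indicator measurableSet_Ici⟩

theorem integral_indicator_Ici_deriv {F : ℝ → ℝ} (hF : ContDiff ℝ 1 F) (a b c : ℝ) :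
    ∫ u in a..b, (Ici c).indicator (deriv F) u =
      (Ici c).indicator (fun u => F u - F c) b - (Ici c).indicator (fun u => F u - F c) a := by
  refine integral_eq_of_hasDerivAt_off_countable _ _ (countable_singleton c) ?_ ?_
    (intervalIntegrable_indicator_Ici hF.continuous_deriv_one a b c)
  · refine (continuous_indicator (fun u hu => ?_)
      (hF.continuous.sub continuous_const).continuousOn).continuousOn
    rw [frontier_Ici, mem_singleton_iff] at hu
    exact sub_eq_zero.2 (congrArg F hu)
  · rintro u ⟨-, huc⟩
    rcases lt_or_gt_of_ne huc with hu | hu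
    · rw [indicator_of_notMem (notMem_Ici.2 hu)]
      refine (hasDerivAt_const u (0 : ℝ)).congr_of_eventuallyEq ?_
      filter_upwards [Iio_mem_nhds hu] with v hv
      exact indicator_of_notMem (notMem_Ici.2 hv) _
    · rw [indicator_of_mem (mem_Ici.2 hu.le)]
      refine ((hF.differentiable one_ne_zero u).hasDerivAt.sub_const (F c)).congr_of_eventuallyEq ?_
      filter_upwards [Ioi_mem_nhds hu] with v hv
      exact indicator_of_mem (mem_Ici.2 (le_of_lt hv)) _

theorem indicator_sum_range_floor_eq_sum_indicator {D w : ℝ} (hD : 0 < D) (g : ℕ → ℝ → ℝ) {N : ℕ}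
    (hN : w < N * D) :
    (Ici 0).indicator (fun w => ∑ k ∈ Finset.range (⌊w / D⌋₊ + 1), g k (w - k * D)) w =
      ∑ k ∈ Finset.range N, (Ici 0).indicator (g k) (w - k * D) := by
  rcases lt_or_ge w 0 with hw | hw
  · rw [indicator_of_notMem (notMem_Ici.2 hw), Finset.sum_eq_zero]
    intro k _
    have hkD : 0 ≤ k * D := by positivity
    exact indicator_of_notMem (notMem_Ici.2 (by linarith)) _
  have mem_range_iff (k : ℕ) : k ∈ Finset.range (⌊w / D⌋₊ + 1) ↔ 0 ≤ w - k * D := by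
    rw [Finset.mem_range, Nat.lt_succ_iff, Nat.le_floor_iff (by positivity), le_div_iff₀ hD,
      sub_nonneg]
  rw [indicator_of_mem (mem_Ici.2 hw)]
  calc ∑ k ∈ Finset.range (⌊w / D⌋₊ + 1), g k (w - k * D)
      = ∑ k ∈ Finset.range (⌊w / D⌋₊ + 1), (Ici 0).indicator (g k) (w - k * D) :=
        Finset.sum_congr rfl fun k hk => (indicator_of_mem ((mem_range_iff k).1 hk) _).symm
    _ = ∑ k ∈ Finset.range N, (Ici 0).indicator (g k) (w - k * D) := by
        refine Finset.sum_subset (fun k hk => ?_) fun k _ hk => ?_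
        · have hkN : (k : ℝ) * D < N * D := by linarith [(mem_range_iff k).1 hk]
          exact Finset.mem_range.2 (Nat.cast_lt.1 (lt_of_mul_lt_mul_right hkN hD.le))
        · exact indicator_of_notMem (fun h => hk ((mem_range_iff k).2 h)) _

end Truncation

section Erlang

open Set

/-- The `k`-th summand of Erlang's formula as a function of `u = w - k * D`, without the truncation
to `0 ≤ u`, so that it is smooth on the whole line. -/
noncomputable def erlangSummand (lam : ℝ) (k : ℕ) (u : ℝ) : ℝ :=
  (-(lam * u)) ^ k * Real.exp (lam * u) / (Nat.factorial k)

variable {lam D : ℝ}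

theorem contDiff_erlangSummand (lam : ℝ) (k : ℕ) : ContDiff ℝ 1 (erlangSummand lam k) := by
  unfold erlangSummand
  fun_prop

theorem erlangSummand_succ_zero (lam : ℝ) (k : ℕ) : erlangSummand lam (k + 1) 0 = 0 := by
  simp [erlangSummand]

theorem deriv_erlangSummand_zero (lam u : ℝ) :
    deriv (erlangSummand lam 0) u = lam * erlangSummand lam 0 u := by
  have h : HasDerivAt (fun u => Real.exp (lam * u)) (Real.exp (lam * u) * (lam * 1)) u :=
    ((hasDerivAt_id u).const_mul lam).exp
  have h0 : erlangSummand lam 0 = fun u => Real.exp (lam * u) := by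
    funext u
    simp [erlangSummand]
  rw [h0, h.deriv]
  ring

theorem deriv_erlangSummand_succ_eq_density (lam : ℝ) (k : ℕ) (u : ℝ) :
    deriv (erlangSummand lam (k + 1)) u =
      (-lam) ^ (k + 1) * u ^ k * Real.exp (lam * u) * ((k + 1 : ℕ) + lam * u) /
        (Nat.factorial (k + 1)) := by
  have hlin : HasDerivAt (fun u => lam * u) lam u := by
    simpa using (hasDerivAt_id u).const_mul lam
  have h : HasDerivAt (erlangSummand lam (k + 1)) _ u :=
    ((hlin.fun_neg.fun_pow (k + 1)).fun_mul hlin.exp).div_const _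
  rw [h.deriv, Nat.add_sub_cancel, ← neg_mul, mul_pow, mul_pow]
  ring

theorem deriv_erlangSummand_succ (lam : ℝ) (k : ℕ) (u : ℝ) :
    deriv (erlangSummand lam (k + 1)) u =
      lam * (erlangSummand lam (k + 1) u - erlangSummand lam k u) := by
  rw [deriv_erlangSummand_succ_eq_density, erlangSummand, erlangSummand, Nat.factorial_succ,
    ← neg_mul, mul_pow, mul_pow]
  push_cast
  field_simp
  ring

theorem PW_eq_sum (hD : 0 < D) {w : ℝ} {N : ℕ} (hN : w < N * D) :
    PW lam D w = (1 - lam * D) *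
      ∑ k ∈ Finset.range N, (Ici 0).indicator (erlangSummand lam k) (w - k * D) := by
  rw [← indicator_sum_range_floor_eq_sum_indicator hD _ hN]
  rcases lt_or_ge w 0 with hw | hw
  · rw [PW, if_pos hw, indicator_of_notMem (notMem_Ici.2 hw), mul_zero]
  · rw [PW, if_neg hw.not_gt, indicator_of_mem (mem_Ici.2 hw)]
    rfl

theorem fW_eq_sum_deriv (lam D w : ℝ) :
    fW lam D w = (1 - lam * D) *
      ∑ k ∈ Finset.range (⌊w / D⌋₊ + 1), deriv (erlangSummand lam k) (w - k * D) := by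
  rw [fW, Finset.sum_range_succ', ← Finset.Ico_add_one_right_eq_Icc, Finset.sum_Ico_eq_sum_range,
    Nat.add_sub_cancel, add_comm (lam * _)]
  congr 2
  · refine Finset.sum_congr rfl fun k _ => ?_
    rw [deriv_erlangSummand_succ_eq_density, add_comm 1 k, Nat.add_sub_cancel]
  · simp [deriv_erlangSummand_zero, erlangSummand]

theorem indicator_fW_eq_sum (hD : 0 < D) {w : ℝ} {N : ℕ} (hN : w < N * D) :
    (Ici 0).indicator (fW lam D) w = (1 - lam * D) *
      ∑ k ∈ Finset.range N, (Ici 0).indicator (deriv (erlangSummand lam k)) (w - k * D) := by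
  rw [← indicator_sum_range_floor_eq_sum_indicator hD _ hN, ← indicator_const_mul]
  simp only [funext (fW_eq_sum_deriv lam D)]

theorem indicator_fW_eq_PW_sub (hD : 0 < D) (w : ℝ) :
    (Ici 0).indicator (fW lam D) w = lam * (PW lam D w - PW lam D (w - D)) := by
  obtain ⟨N, hN⟩ := exists_lt_nsmul hD (w - D)
  rw [nsmul_eq_mul] at hN
  have hN1 : w < (N + 1 : ℕ) * D := by push_cast; linarith
  have hshift (k : ℕ) : w - D - k * D = w - (k + 1 : ℕ) * D := by push_cast; ring
  have hzero (u : ℝ) : (Ici 0).indicator (deriv (erlangSummand lam 0)) u =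
      lam * (Ici 0).indicator (erlangSummand lam 0) u := by
    simp only [funext (deriv_erlangSummand_zero lam), indicator_const_mul]
  have hsucc (k : ℕ) (u : ℝ) : (Ici 0).indicator (deriv (erlangSummand lam (k + 1))) u =
      lam * ((Ici 0).indicator (erlangSummand lam (k + 1)) u -
        (Ici 0).indicator (erlangSummand lam k) u) := by
    simp only [funext (deriv_erlangSummand_succ lam k), indicator_const_mul, indicator_sub]
  rw [indicator_fW_eq_sum hD hN1, PW_eq_sum hD hN1, PW_eq_sum hD hN, Finset.sum_range_succ',
    Finset.sum_range_succ']
  simp only [hshift, hzero, hsucc, ← Finset.mul_sum, Finset.sum_sub_distrib]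
  ring

theorem intervalIntegrable_indicator_deriv_erlangSummand_comp_sub (lam c : ℝ) (k : ℕ) (x y : ℝ) :
    IntervalIntegrable (fun u => (Ici 0).indicator (deriv (erlangSummand lam k)) (u - c))
      volume x y := by
  simpa using (intervalIntegrable_indicator_Ici
    (contDiff_erlangSummand lam k).continuous_deriv_one (x - c) (y - c) 0).comp_sub_right c

theorem intervalIntegrable_indicator_fW (hD : 0 < D) (x y : ℝ) :
    IntervalIntegrable ((Ici 0).indicator (fW lam D)) volume x y := by
  obtain ⟨N, hN⟩ := exists_lt_nsmul hD (max x y)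
  rw [nsmul_eq_mul] at hN
  have hsum := (IntervalIntegrable.sum (Finset.range N) fun k _ =>
    intervalIntegrable_indicator_deriv_erlangSummand_comp_sub lam (k * D) k x y).const_mul
      (1 - lam * D)
  refine hsum.congr fun u hu => ?_
  rw [indicator_fW_eq_sum hD (hu.2.trans_lt hN), Finset.sum_apply]

theorem PW_sub_atom_eq_sum (hD : 0 < D) {w : ℝ} {N : ℕ} (hN : w < (N + 1 : ℕ) * D) :
    PW lam D w - (Ici 0).indicator (fun _ => 1 - lam * D) w =
      (1 - lam * D) * ∑ k ∈ Finset.range (N + 1),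
        (Ici 0).indicator (fun u => erlangSummand lam k u - erlangSummand lam k 0) (w - k * D) := by
  have hzero : erlangSummand lam 0 0 = 1 := by simp [erlangSummand]
  have hatom : (Ici 0).indicator (fun _ => 1 - lam * D) w =
      (1 - lam * D) * (Ici 0).indicator (fun _ => (1 : ℝ)) w := by
    rw [← indicator_const_mul, mul_one]
  rw [PW_eq_sum hD hN, hatom, ← mul_sub, Finset.sum_range_succ', Finset.sum_range_succ']
  simp only [erlangSummand_succ_zero, hzero, sub_zero, indicator_sub, Nat.cast_zero, zero_mul]
  ring

theorem integral_indicator_fW (hD : 0 < D) (x y : ℝ) :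
    ∫ u in x..y, (Ici 0).indicator (fW lam D) u =
      (PW lam D y - (Ici 0).indicator (fun _ => 1 - lam * D) y) -
        (PW lam D x - (Ici 0).indicator (fun _ => 1 - lam * D) x) := by
  obtain ⟨N, hN⟩ := exists_lt_nsmul hD (max x y)
  rw [nsmul_eq_mul] at hN
  have hN1 : max x y < (N + 1 : ℕ) * D := by push_cast; linarith
  calc ∫ u in x..y, (Ici 0).indicator (fW lam D) u
      = ∫ u in x..y, (1 - lam * D) * ∑ k ∈ Finset.range (N + 1),
          (Ici 0).indicator (deriv (erlangSummand lam k)) (u - k * D) :=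
        intervalIntegral.integral_congr fun u hu =>
          indicator_fW_eq_sum hD (hu.2.trans_lt hN1)
    _ = (1 - lam * D) * ∑ k ∈ Finset.range (N + 1), ∫ u in (x - k * D)..(y - k * D),
          (Ici 0).indicator (deriv (erlangSummand lam k)) u := by
        rw [intervalIntegral.integral_const_mul,
          intervalIntegral.integral_finsetSum fun (k : ℕ) _ =>
            intervalIntegrable_indicator_deriv_erlangSummand_comp_sub lam (k * D) k x y]
        simp only [intervalIntegral.integral_comp_sub_right]
    _ = _ := by
        rw [PW_sub_atom_eq_sum hD ((le_max_right x y).trans_lt hN1),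
          PW_sub_atom_eq_sum hD ((le_max_left x y).trans_lt hN1), ← mul_sub,
          ← Finset.sum_sub_distrib]
        simp only [integral_indicator_Ici_deriv (contDiff_erlangSummand lam _)]

end Erlang

section WaitingTime

open Set
open scoped Convolution

variable {lam D : ℝ}

/-- `λ` times the tail `t ↦ P(S > t)` of the constant service time `S = D`, the renewal kernel of
the M/D/1 waiting time. It is right-continuous, so that the renewal equation holds at every point
and not only almost everywhere. -/
noncomputable def serviceTailKernel (lam D : ℝ) : ℝ → ℝ :=
  (Ico 0 D).indicator fun _ => lam

theorem serviceTailKernel_nonneg (hlam : 0 ≤ lam) (t : ℝ) : 0 ≤ serviceTailKernel lam D t :=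
  indicator_nonneg (fun _ _ => hlam) t

theorem serviceTailKernel_of_neg {t : ℝ} (ht : t < 0) : serviceTailKernel lam D t = 0 :=
  indicator_of_notMem (fun h => ht.not_ge h.1) _

theorem mul_serviceTailKernel (f : ℝ → ℝ) :
    (fun t => f t * serviceTailKernel lam D t) = (Ico 0 D).indicator fun t => f t * lam :=
  funext fun _ => (indicator_mul_right _ f _).symm

theorem integrable_mul_serviceTailKernel {f : ℝ → ℝ} (hf : Continuous f) (lam D : ℝ) :
    Integrable fun t => f t * serviceTailKernel lam D t := by
  rw [mul_serviceTailKernel, integrable_indicator_iff measurableSet_Ico]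
  exact ((hf.mul continuous_const).integrableOn_Icc).mono_set Ico_subset_Icc_self

theorem integral_mul_serviceTailKernel (hD : 0 ≤ D) (f : ℝ → ℝ) :
    ∫ t, f t * serviceTailKernel lam D t = lam * ∫ t in (0 : ℝ)..D, f t := by
  rw [mul_serviceTailKernel, integral_indicator measurableSet_Ico, integral_mul_const,
    integral_Ico_eq_integral_Ioc, ← intervalIntegral.integral_of_le hD, mul_comm]

theorem convolution_serviceTailKernel (hD : 0 ≤ D) (φ : ℝ → ℝ) (w : ℝ) :
    (serviceTailKernel lam D ⋆ φ : ℝ → ℝ) w = lam * ∫ u in (w - D)..w, φ u := by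
  rw [convolution_lsmul]
  simp only [smul_eq_mul, mul_comm (serviceTailKernel lam D _)]
  rw [integral_mul_serviceTailKernel hD fun t => φ (w - t),
    intervalIntegral.integral_comp_sub_left φ w, sub_zero]

theorem isRenewalSolution_fW (hD : 0 < D) :
    IsRenewalSolution (serviceTailKernel lam D) (fun w => (1 - lam * D) * serviceTailKernel lam D w)
      ((Ici 0).indicator (fW lam D)) := by
  funext w
  have hkernel : (1 - lam * D) * serviceTailKernel lam D w =
      lam * ((Ici 0).indicator (fun _ => 1 - lam * D) w -
        (Ici 0).indicator (fun _ => 1 - lam * D) (w - D)) := by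
    simp only [serviceTailKernel, indicator_apply, mem_Ico, mem_Ici, sub_nonneg]
    grind
  rw [Pi.add_apply, convolution_serviceTailKernel hD.le, integral_indicator_fW hD,
    indicator_fW_eq_PW_sub hD, hkernel]
  ring

theorem integrableOn_Iic_exp_mul_indicator_fW (hD : 0 < D) (s T : ℝ) :
    IntegrableOn (fun w => Real.exp (s * w) * (Ici 0).indicator (fW lam D) w) (Iic T) := by
  have hIcc : IntegrableOn (fun w => Real.exp (s * w) * (Ici 0).indicator (fW lam D) w)
      (Icc 0 (max 0 T)) := by
    refine IntegrableOn.continuousOn_mul (by fun_prop) ?_ isCompact_Icc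
    exact (intervalIntegrable_iff_integrableOn_Icc_of_le (le_max_left 0 T)).1
      (intervalIntegrable_indicator_fW hD 0 (max 0 T))
  refine hIcc.of_forall_sdiff_eq_zero measurableSet_Iic fun w hw => ?_
  have hw0 : w ∉ Ici 0 := fun h => hw.2 ⟨h, le_max_of_le_right hw.1⟩
  rw [indicator_of_notMem hw0, mul_zero]

theorem integrable_exp_mul_indicator_fW (hlam : 0 ≤ lam) (hD : 0 < D) {s : ℝ}
    (hs : lam * ∫ t in (0 : ℝ)..D, Real.exp (-s * t) < 1) :
    Integrable fun w => Real.exp (-s * w) * (Ici 0).indicator (fW lam D) w := by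
  have hnorm (t : ℝ) : ‖Real.exp (-s * t) * serviceTailKernel lam D t‖ =
      Real.exp (-s * t) * serviceTailKernel lam D t :=
    Real.norm_of_nonneg (mul_nonneg (Real.exp_nonneg _) (serviceTailKernel_nonneg hlam t))
  have hk := integrable_mul_serviceTailKernel (f := fun t => Real.exp (-s * t)) (by fun_prop) lam D
  refine ((isRenewalSolution_fW hD).exp_smul (-s)).integrable hk ?_ ?_ ?_
    (integrableOn_Iic_exp_mul_indicator_fW hD (-s))
  · intro t ht
    rw [serviceTailKernel_of_neg ht, mul_zero]
  · simp only [hnorm]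
    rwa [integral_mul_serviceTailKernel hD.le]
  · simpa only [smul_eq_mul, mul_left_comm] using hk.const_mul (1 - lam * D)

/-- The Laplace–Stieltjes transform `E[e^{-sW}]` of the stationary waiting time `W` of the M/D/1
queue: the atom of mass `1 - λD` at `0` plus the transform of the density `fW`. -/
noncomputable def waitingTransform (lam D s : ℝ) : ℝ :=
  (1 - lam * D) + ∫ w in Ioi (0 : ℝ), Real.exp (-s * w) * fW lam D w

theorem exp_mul_indicator_fW (s : ℝ) :
    (fun w => Real.exp (-s * w) * (Ici 0).indicator (fW lam D) w) =
      (Ici 0).indicator fun w => Real.exp (-s * w) * fW lam D w :=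
  funext fun _ => (indicator_mul_right _ (fun w => Real.exp (-s * w)) _).symm

theorem integrableOn_exp_mul_fW (hlam : 0 ≤ lam) (hD : 0 < D) {s : ℝ}
    (hs : lam * ∫ t in (0 : ℝ)..D, Real.exp (-s * t) < 1) :
    IntegrableOn (fun w => Real.exp (-s * w) * fW lam D w) (Ioi 0) := by
  have h := integrable_exp_mul_indicator_fW hlam hD hs
  rw [exp_mul_indicator_fW, integrable_indicator_iff measurableSet_Ici] at h
  exact h.mono_set Ioi_subset_Ici_self

theorem waitingTransform_eq_div (hlam : 0 ≤ lam) (hD : 0 < D) {s : ℝ}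
    (hs : lam * ∫ t in (0 : ℝ)..D, Real.exp (-s * t) < 1) :
    waitingTransform lam D s =
      (1 - lam * D) / (1 - lam * ∫ t in (0 : ℝ)..D, Real.exp (-s * t)) := by
  have hk := integrable_mul_serviceTailKernel (f := fun t => Real.exp (-s * t)) (by fun_prop) lam D
  have hrenewal := ((isRenewalSolution_fW hD).exp_smul (-s)).integral_eq hk
    (by simpa only [smul_eq_mul, mul_left_comm] using hk.const_mul (1 - lam * D))
    (integrable_exp_mul_indicator_fW hlam hD hs)
  simp only [smul_eq_mul, mul_left_comm _ (1 - lam * D)] at hrenewal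
  rw [integral_const_mul, integral_mul_serviceTailKernel hD.le, exp_mul_indicator_fW,
    integral_indicator measurableSet_Ici, integral_Ici_eq_integral_Ioi] at hrenewal
  rw [waitingTransform, eq_div_iff (sub_pos.2 hs).ne']
  linarith

theorem mul_integral_exp_neg_mul_lt_one (hlam : 0 ≤ lam) (hD : 0 ≤ D) (hstab : lam * D < 1) {s : ℝ}
    (hs : 0 ≤ s) : lam * ∫ t in (0 : ℝ)..D, Real.exp (-s * t) < 1 := by
  have hle : ∫ t in (0 : ℝ)..D, Real.exp (-s * t) ≤ ∫ _ in (0 : ℝ)..D, (1 : ℝ) := by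
    refine intervalIntegral.integral_mono_on hD
      (Continuous.intervalIntegrable (by fun_prop) _ _) intervalIntegrable_const fun t ht => ?_
    exact Real.exp_le_one_iff.2 (by nlinarith [ht.1])
  rw [intervalIntegral.integral_const, sub_zero, smul_eq_mul, mul_one] at hle
  exact (mul_le_mul_of_nonneg_left hle hlam).trans_lt hstab

theorem waitingTransform_zero (hlam : 0 ≤ lam) (hD : 0 < D) (hstab : lam * D < 1) :
    waitingTransform lam D 0 = 1 := by
  rw [waitingTransform_eq_div hlam hD (mul_integral_exp_neg_mul_lt_one hlam hD.le hstab le_rfl)]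
  simp [(sub_pos.2 hstab).ne']

theorem integral_exp_neg_mul {s : ℝ} (hs : s ≠ 0) (D : ℝ) :
    ∫ t in (0 : ℝ)..D, Real.exp (-s * t) = (1 - Real.exp (-s * D)) / s := by
  rw [intervalIntegral.integral_comp_mul_left Real.exp (neg_ne_zero.2 hs), integral_exp, mul_zero,
    Real.exp_zero, smul_eq_mul]
  field_simp
  ring

theorem waitingTransform_of_pos (hlam : 0 ≤ lam) (hD : 0 < D) (hstab : lam * D < 1) {s : ℝ}
    (hs : 0 < s) :
    waitingTransform lam D s = (1 - lam * D) *
      (1 + lam * (Real.exp (s * D) - 1) / ((s - lam) * Real.exp (s * D) + lam)) := by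
  have hlt := mul_integral_exp_neg_mul_lt_one hlam hD.le hstab hs.le
  rw [waitingTransform_eq_div hlam hD hlt]
  rw [integral_exp_neg_mul hs.ne', neg_mul, Real.exp_neg] at hlt ⊢
  have hE : 0 < Real.exp (s * D) := Real.exp_pos _
  generalize Real.exp (s * D) = E at *
  have hdenom : 1 - lam * ((1 - E⁻¹) / s) = ((s - lam) * E + lam) / (s * E) := by
    field_simp
    ring
  have hpos : 0 < (s - lam) * E + lam := by
    rw [← sub_pos, hdenom] at hlt
    exact (div_pos_iff_of_pos_right (by positivity)).1 hlt
  rw [hdenom]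
  field_simp
  ring

theorem atom_add_integral_eq_one_sub_waitingTransform (hlam : 0 ≤ lam) (hD : 0 < D)
    (hstab : lam * D < 1) {s : ℝ} (hs : 0 ≤ s) :
    (1 - lam * D) * (1 - Real.exp (-s * D)) +
        ∫ w in Ioi (0 : ℝ), (1 - Real.exp (-s * (w + D))) * fW lam D w =
      1 - Real.exp (-s * D) * waitingTransform lam D s := by
  have hint {r : ℝ} (hr : 0 ≤ r) :=
    integrableOn_exp_mul_fW hlam hD (mul_integral_exp_neg_mul_lt_one hlam hD.le hstab hr)
  have hsplit (w : ℝ) : (1 - Real.exp (-s * (w + D))) * fW lam D w =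
      Real.exp (-0 * w) * fW lam D w -
        Real.exp (-s * D) * (Real.exp (-s * w) * fW lam D w) := by
    rw [mul_add, Real.exp_add, neg_zero, zero_mul, Real.exp_zero]
    ring
  have hmass := waitingTransform_zero hlam hD hstab
  rw [waitingTransform] at hmass ⊢
  simp only [hsplit]
  rw [integral_sub (hint le_rfl) ((hint hs).const_mul _), integral_const_mul]
  linear_combination hmass

end WaitingTime

theorem md1_tandem_pA_general (lam D μ₁ α₁ : ℝ) (hlam : 0 ≤ lam) (hμ₁ : 0 < μ₁)
    (hD : 0 < D) (hstab : lam * D < 1) (hα₁ : α₁ = μ₁ - lam) :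
    lam / μ₁ * ((1 - lam * D) * (1 - Real.exp (-μ₁ * D)) +
        ∫ w in Set.Ioi (0:ℝ), (1 - Real.exp (-μ₁ * (w + D))) * fW lam D w) =
      lam / μ₁ * (1 - (1 - lam * D) * Real.exp (-μ₁ * D) *
        (1 + lam * (Real.exp (μ₁ * D) - 1) / (α₁ * Real.exp (μ₁ * D) + lam))) := by
  rw [atom_add_integral_eq_one_sub_waitingTransform hlam hD hstab hμ₁.le,
    waitingTransform_of_pos hlam hD hstab hμ₁, hα₁]
  ring

/-- probability `p(A)` that a packet of the M/M/1 – M/D/1 tandem is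
queued at both systems. -/
theorem md1_tandem_pA (lam D μ₁ α₁ : ℝ) (hlam : 0 < lam) (hμ₁ : lam < μ₁)
    (hD : 0 < D) (hstab : lam * D < 1) (hα₁ : α₁ = μ₁ - lam) :
    lam / μ₁ * ((1 - lam * D) * (1 - Real.exp (-μ₁ * D)) +
        ∫ w in Set.Ioi (0:ℝ), (1 - Real.exp (-μ₁ * (w + D))) * fW lam D w) =
      lam / μ₁ * (1 - (1 - lam * D) * Real.exp (-μ₁ * D) *
        (1 + lam * (Real.exp (μ₁ * D) - 1) / (α₁ * Real.exp (μ₁ * D) + lam))) :=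
  md1_tandem_pA_general lam D μ₁ α₁ hlam.le (hlam.trans hμ₁) hD hstab hα₁
end
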